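/- Let ε : ℝ^m → ℝ be continuously differentiable, let η > 0, Q̄ ≥ 0, and let θ : ℝ → ℝ^m be a differentiable curve satisfying θ'(t) = −η ε(θ(t)) ∇ε(θ(t)) for all t ≥ 0. Assume ε(θ(0)) ≥ 0 and ‖∇ε(θ(s))‖² ≥ Q̄ for all s ≥ 0. Then for all t ≥ 0, 0 ≤ ε(θ(t)) ≤ e^{−η Q̄ t} · ε(θ(0)); i.e., the residual training error converges exponentially to zero at rate at least η·Q̄. -/

import Mathlib

/-!
Along the flow, `u = ε ∘ θ` solves the scalar equation `u' = -η ‖∇ε‖² u`, so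
`(u²)' ≤ -2 η Q̄ u²`, and Grönwall's inequality started at any time `a ≥ 0` gives
`|u t| ≤ |u a| exp (-η Q̄ (t - a))`. For `a = 0` this is the decay of the error. It also keeps
the error nonnegative: to become negative `u` would have to vanish at some time `a`, and the
estimate started there forces `u = 0` from then on.
-/

open Set
open scoped RealInnerProductSpace Gradient

section Gronwall

variable {E : Type*} [NormedAddCommGroup E] [InnerProductSpace ℝ E] {K a b : ℝ}

theorem norm_le_norm_mul_exp_of_inner_deriv_right_le {f f' : ℝ → E}
    (hf : ContinuousOn f (Icc a b))
    (hf' : ∀ t ∈ Ico a b, HasDerivWithinAt f (f' t) (Ici t) t)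
    (bound : ∀ t ∈ Ico a b, ⟪f t, f' t⟫ ≤ K * ‖f t‖ ^ 2) :
    ∀ t ∈ Icc a b, ‖f t‖ ≤ ‖f a‖ * Real.exp (K * (t - a)) := by
  intro t ht
  have norm_sq_le : ‖f t‖ ^ 2 ≤ gronwallBound (‖f a‖ ^ 2) (2 * K) 0 (t - a) :=
    le_gronwallBound_of_liminf_deriv_right_le (hf.norm.pow 2)
      (fun s hs _ hr => (hf' s hs).norm_sq.liminf_right_slope_le hr) le_rfl
      (fun s hs => by simpa [mul_assoc] using bound s hs) t ht
  refine le_of_sq_le_sq ?_ (by positivity)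
  calc ‖f t‖ ^ 2 ≤ ‖f a‖ ^ 2 * Real.exp (2 * K * (t - a)) := by
        rwa [gronwallBound_ε0] at norm_sq_le
    _ = (‖f a‖ * Real.exp (K * (t - a))) ^ 2 := by
        rw [mul_pow, ← Real.exp_nat_mul, Nat.cast_ofNat, mul_assoc]

variable {u u' : ℝ → ℝ}

theorem abs_le_abs_mul_exp_of_mul_deriv_right_le
    (hu : ContinuousOn u (Icc a b))
    (hu' : ∀ t ∈ Ico a b, HasDerivWithinAt u (u' t) (Ici t) t)
    (bound : ∀ t ∈ Ico a b, u t * u' t ≤ K * u t ^ 2) :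
    ∀ t ∈ Icc a b, |u t| ≤ |u a| * Real.exp (K * (t - a)) :=
  norm_le_norm_mul_exp_of_inner_deriv_right_le hu hu' fun t ht => by
    simpa [mul_comm] using bound t ht

theorem nonneg_of_mul_deriv_right_le
    (hu : ContinuousOn u (Icc a b))
    (hu' : ∀ t ∈ Ico a b, HasDerivWithinAt u (u' t) (Ici t) t)
    (bound : ∀ t ∈ Ico a b, u t * u' t ≤ K * u t ^ 2) (ha : 0 ≤ u a) :
    ∀ t ∈ Icc a b, 0 ≤ u t := by
  intro t ht
  by_contra! hneg
  obtain ⟨s, hs, hus⟩ : ∃ s ∈ Icc a t, u s = 0 :=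
    intermediate_value_Icc' ht.1 (hu.mono (Icc_subset_Icc_right ht.2)) ⟨hneg.le, ha⟩
  have abs_le : |u t| ≤ |u s| * Real.exp (K * (t - s)) :=
    abs_le_abs_mul_exp_of_mul_deriv_right_le (hu.mono (Icc_subset_Icc_left hs.1))
      (fun r hr => hu' r (Ico_subset_Ico_left hs.1 hr))
      (fun r hr => bound r (Ico_subset_Ico_left hs.1 hr)) t ⟨hs.2, ht.2⟩
  rw [hus, abs_zero, zero_mul] at abs_le
  exact hneg.ne (abs_nonpos_iff.1 abs_le)

end Gronwall

section GradientFlow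

variable {F : Type*} [NormedAddCommGroup F] [InnerProductSpace ℝ F] [CompleteSpace F]
  {ε : F → ℝ} {θ : ℝ → F} {s : Set ℝ} {t : ℝ}

theorem hasDerivWithinAt_comp_of_hasGradientAt {g v : F} (hε : HasGradientAt ε g (θ t))
    (hθ : HasDerivWithinAt θ v s t) : HasDerivWithinAt (ε ∘ θ) ⟪g, v⟫ s t :=
  hε.hasFDerivAt.comp_hasDerivWithinAt t hθ

theorem hasDerivWithinAt_comp_of_hasDerivWithinAt_smul_gradient {c : ℝ}
    (hε : DifferentiableAt ℝ ε (θ t)) (hθ : HasDerivWithinAt θ (c • ∇ ε (θ t)) s t) :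
    HasDerivWithinAt (ε ∘ θ) (c * ‖∇ ε (θ t)‖ ^ 2) s t := by
  simpa only [inner_smul_right, real_inner_self_eq_norm_sq] using
    hasDerivWithinAt_comp_of_hasGradientAt hε.hasGradientAt hθ

end GradientFlow

theorem stmt_9_general {F : Type*} [NormedAddCommGroup F] [InnerProductSpace ℝ F]
    [CompleteSpace F] {ε : F → ℝ} (hε : Differentiable ℝ ε) {η Qbar : ℝ} (hη : 0 ≤ η) {θ : ℝ → F}
    (hθ : ∀ t, 0 ≤ t → HasDerivWithinAt θ (-(η * ε (θ t)) • ∇ ε (θ t)) (Ici 0) t)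
    (hε0 : 0 ≤ ε (θ 0)) (hQ : ∀ t, 0 ≤ t → Qbar ≤ ‖∇ ε (θ t)‖ ^ 2) :
    ∀ t, 0 ≤ t → 0 ≤ ε (θ t) ∧ ε (θ t) ≤ Real.exp (-(η * Qbar * t)) * ε (θ 0) := by
  intro t ht
  have deriv_error (s : ℝ) (hs : 0 ≤ s) : HasDerivWithinAt (ε ∘ θ)
      (-(η * ε (θ s)) * ‖∇ ε (θ s)‖ ^ 2) (Ici 0) s :=
    hasDerivWithinAt_comp_of_hasDerivWithinAt_smul_gradient (hε _) (hθ s hs)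
  have continuousOn_error : ContinuousOn (ε ∘ θ) (Icc 0 t) := fun s hs =>
    (deriv_error s hs.1).continuousWithinAt.mono Icc_subset_Ici_self
  have right_deriv_error (s : ℝ) (hs : s ∈ Ico 0 t) :=
    (deriv_error s hs.1).mono (Ici_subset_Ici.2 hs.1)
  have dissipation (s : ℝ) (hs : s ∈ Ico 0 t) :
      ε (θ s) * (-(η * ε (θ s)) * ‖∇ ε (θ s)‖ ^ 2) ≤ -(η * Qbar) * ε (θ s) ^ 2 := by
    have := mul_le_mul_of_nonneg_left (hQ s hs.1) (mul_nonneg hη (sq_nonneg (ε (θ s))))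
    linarith
  have htt : t ∈ Icc 0 t := right_mem_Icc.2 ht
  refine ⟨nonneg_of_mul_deriv_right_le continuousOn_error right_deriv_error dissipation hε0 t htt,
    (le_abs_self _).trans ?_⟩
  simpa [abs_of_nonneg hε0, mul_comm] using abs_le_abs_mul_exp_of_mul_deriv_right_le
    continuousOn_error right_deriv_error dissipation t htt

/-- If the QNTK `‖∇ε‖²` stays bounded below by `Qbar` along the gradient flow of `½ε²`,
then the residual error converges exponentially to zero at rate at least `η Qbar`. -/
theorem stmt_9 {m : ℕ} (ε : EuclideanSpace ℝ (Fin m) → ℝ) (hε : ContDiff ℝ 1 ε)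
    (η : ℝ) (hη : 0 < η) (Qbar : ℝ) (hQbar : 0 ≤ Qbar)
    (θ : ℝ → EuclideanSpace ℝ (Fin m))
    (hθ : ∀ t : ℝ, 0 ≤ t → HasDerivAt θ (-(η * ε (θ t)) • gradient ε (θ t)) t)
    (hε0 : 0 ≤ ε (θ 0))
    (hQ : ∀ s : ℝ, 0 ≤ s → Qbar ≤ ‖gradient ε (θ s)‖ ^ 2) :
    ∀ t : ℝ, 0 ≤ t →
      0 ≤ ε (θ t) ∧ ε (θ t) ≤ Real.exp (-(η * Qbar * t)) * ε (θ 0) :=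
  stmt_9_general (hε.differentiable one_ne_zero) hη.le
    (fun t ht => (hθ t ht).hasDerivWithinAt) hε0 hQ
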